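/- arXiv:0901.0823 — 11 statements merged into one kernel-verified Lean document; each statement's English description precedes it below -/
import Mathlib

section
/- Let R be a commutative ring with unit equipped with a total unary operation i : R → R satisfying the restricted inverse law Ril: x·(x·i(x)) = x for all x ∈ R. Then for all x, y ∈ R, if x·y = 1 then i(x) = y (implicit definition of inverse). -/
/-!
A left inverse of `x` cancels `x * (x * i x) = x` to `x * i x = 1`, so `i x` is then a right inverse
of `x` and equals every left inverse of `x`. Without commutativity, `x * y = 1` only gives `y` a
left inverse; the same cancellation, applied to `y`, shows that `i y = x`, and hence `y * x = 1`.
-/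

section Monoid

variable {M : Type*} [Monoid M]

theorem mul_eq_one_of_mul_mul_eq_self {a b c : M} (hba : b * a = 1) (hac : a * (a * c) = a) :
    a * c = 1 :=
  (isLeftRegular_of_mul_eq_one hba).mul_left_eq_self_iff.mp hac

theorem isDedekindFiniteMonoid_of_exists_mul_mul_eq_self
    (hM : ∀ a : M, ∃ b : M, a * (a * b) = a) : IsDedekindFiniteMonoid M where
  mul_eq_one_symm {x y} hxy := by
    obtain ⟨z, hz⟩ := hM y
    have hyz : y * z = 1 := mul_eq_one_of_mul_mul_eq_self hxy hz
    have hxz : x = z := left_inv_eq_right_inv hxy hyz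
    rw [hxz, hyz]

theorem meadow_ril_implicit_inverse_general (i : M → M) (Ril : ∀ x : M, x * (x * i x) = x) :
    ∀ x y : M, x * y = 1 → i x = y := by
  intro x y hxy
  have : IsDedekindFiniteMonoid M :=
    isDedekindFiniteMonoid_of_exists_mul_mul_eq_self fun a ↦ ⟨i a, Ril a⟩
  have hyx : y * x = 1 := mul_eq_one_symm hxy
  have hxi : x * i x = 1 := mul_eq_one_of_mul_mul_eq_self hyx (Ril x)
  exact (left_inv_eq_right_inv hyx hxi).symm

end Monoid

theorem meadow_ril_implicit_inverse {R : Type*} [CommRing R] (i : R → R)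
    (Ril : ∀ x : R, x * (x * i x) = x) :
    ∀ x y : R, x * y = 1 → i x = y :=
  meadow_ril_implicit_inverse_general i Ril
end

section
/- In every meadow, the inverse is multiplicative: for all x, y, i(x·y) = i(x)·i(y) (derivability of SIP2 from the meadow axioms). -/
/-!
Both `i (x * y)` and `i y * i x` are generalized inverses of `x * y`, and generalized inverses are
unique as soon as idempotents commute. The meadow law is thus the commutative case of
`(x * y)⁻¹ = y⁻¹ * x⁻¹` in inverse semigroups.
-/

/-- `b` is a generalized inverse of `a` in the sense of semigroup theory: both an inner and an outer
inverse. For `b = i a` the field `inner` is the restricted inverse law, with the factors ordered as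
in a noncommutative semigroup. -/
structure IsGeneralizedInverse {S : Type*} [Semigroup S] (a b : S) : Prop where
  inner : a * b * a = a
  outer : b * a * b = b

namespace IsGeneralizedInverse

variable {S : Type*} [Semigroup S] {a b c d : S}

theorem symm (h : IsGeneralizedInverse a b) : IsGeneralizedInverse b a :=
  ⟨h.outer, h.inner⟩

theorem isIdempotentElem_mul (h : IsGeneralizedInverse a b) : IsIdempotentElem (a * b) :=
  calc a * b * (a * b) = a * b * a * b := (mul_assoc _ _ _).symm
    _ = a * b := by rw [h.inner]

theorem mul_eq_mul_left (hb : IsGeneralizedInverse a b) (hc : IsGeneralizedInverse a c)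
    (hcomm : Commute (a * b) (a * c)) : a * b = a * c :=
  calc a * b = a * c * a * b := by rw [hc.inner]
    _ = a * c * (a * b) := mul_assoc _ _ _
    _ = a * b * (a * c) := hcomm.eq.symm
    _ = a * b * a * c := (mul_assoc _ _ _).symm
    _ = a * c := by rw [hb.inner]

theorem mul_eq_mul_right (hb : IsGeneralizedInverse a b) (hc : IsGeneralizedInverse a c)
    (hcomm : Commute (b * a) (c * a)) : b * a = c * a :=
  calc b * a = b * (a * c * a) := by rw [hc.inner]
    _ = b * a * (c * a) := by simp only [mul_assoc]
    _ = c * a * (b * a) := hcomm.eq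
    _ = c * (a * b * a) := by simp only [mul_assoc]
    _ = c * a := by rw [hb.inner]

theorem eq_of_commute (hb : IsGeneralizedInverse a b) (hc : IsGeneralizedInverse a c)
    (hleft : Commute (a * b) (a * c)) (hright : Commute (b * a) (c * a)) : b = c :=
  calc b = b * a * b := hb.outer.symm
    _ = c * a * b := by rw [hb.mul_eq_mul_right hc hright]
    _ = c * a * c := by rw [mul_assoc, hb.mul_eq_mul_left hc hleft, ← mul_assoc]
    _ = c := hc.outer

theorem mul_mul_mul_cancel_of_commute (hab : IsGeneralizedInverse a b)
    (hcd : IsGeneralizedInverse c d) (hcomm : Commute (b * a) (c * d)) :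
    a * c * (d * b) * (a * c) = a * c :=
  calc a * c * (d * b) * (a * c) = a * (c * d * (b * a)) * c := by simp only [mul_assoc]
    _ = a * (b * a * (c * d)) * c := by rw [hcomm.eq]
    _ = a * b * a * (c * d * c) := by simp only [mul_assoc]
    _ = a * c := by rw [hab.inner, hcd.inner]

theorem mul_of_commute (hab : IsGeneralizedInverse a b) (hcd : IsGeneralizedInverse c d)
    (hcomm : Commute (b * a) (c * d)) : IsGeneralizedInverse (a * c) (d * b) where
  inner := hab.mul_mul_mul_cancel_of_commute hcd hcomm
  outer := hcd.symm.mul_mul_mul_cancel_of_commute hab.symm hcomm.symm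

end IsGeneralizedInverse

theorem meadow_inv_mul_general {S : Type*} [Semigroup S] (i : S → S)
    (Ref : ∀ x : S, i (i x) = x)
    (Ril : ∀ x : S, x * i x * x = x)
    (hcomm : ∀ e f : S, IsIdempotentElem e → IsIdempotentElem f → Commute e f) (x y : S) :
    i (x * y) = i y * i x := by
  have hi (z : S) : IsGeneralizedInverse z (i z) :=
    ⟨Ril z, by simpa only [Ref] using Ril (i z)⟩
  have hmul : IsGeneralizedInverse (x * y) (i y * i x) :=
    (hi x).mul_of_commute (hi y) <|
      hcomm _ _ (hi x).symm.isIdempotentElem_mul (hi y).isIdempotentElem_mul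
  exact (hi (x * y)).eq_of_commute hmul
    (hcomm _ _ (hi (x * y)).isIdempotentElem_mul hmul.isIdempotentElem_mul)
    (hcomm _ _ (hi (x * y)).symm.isIdempotentElem_mul hmul.symm.isIdempotentElem_mul)

theorem meadow_inv_mul {R : Type*} [CommRing R] (i : R → R)
    (Ref : ∀ x : R, i (i x) = x)
    (Ril : ∀ x : R, x * (x * i x) = x) :
    ∀ x y : R, i (x * y) = i x * i y := by
  intro x y
  have Ril_assoc (z : R) : z * i z * z = z := by rw [mul_comm, Ril]
  rw [meadow_inv_mul_general i Ref Ril_assoc (fun e f _ _ ↦ Commute.all e f), mul_comm]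
end

section
/- In every meadow, the inverse commutes with negation: for all x, i(−x) = −i(x) (derivability of SIP1 from the meadow axioms). -/
/-! In a commutative semigroup, generalized inverses are unique. The inverse of `-x` is one of `-x`
by the axioms, and `-i x` is another because the two signs cancel. -/

/-- `y` is a generalized inverse of `x`, in the sense of inverse semigroups: both laws are required,
so the relation is symmetric. It is the notion that the inverse of a meadow satisfies. -/
structure IsGeneralizedInverse_s3 {S : Type*} [Mul S] (x y : S) : Prop where
  mul_inv_mul : x * y * x = x
  inv_mul_inv : y * x * y = y

namespace IsGeneralizedInverse_s3

theorem of_mul_mul_self {S : Type*} [Semigroup S] {x y : S}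
    (hxy : x * (x * y) = x) (hyx : y * (y * x) = y) : IsGeneralizedInverse_s3 x y := by
  have absorb {a b : S} (hab : a * (a * b) = a) (hba : b * (b * a) = b) : a * b * a = a :=
    calc
      a * b * a = a * (a * b) * b * a := by rw [hab]
      _ = a * (a * (b * (b * a))) := by simp only [mul_assoc]
      _ = a := by rw [hba, hab]
  exact ⟨absorb hxy hyx, absorb hyx hxy⟩

theorem neg {S : Type*} [Mul S] [HasDistribNeg S] {x y : S} (h : IsGeneralizedInverse_s3 x y) :
    IsGeneralizedInverse_s3 (-x) (-y) where
  mul_inv_mul := by rw [neg_mul_neg, mul_neg, h.mul_inv_mul]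
  inv_mul_inv := by rw [neg_mul_neg, mul_neg, h.inv_mul_inv]

theorem eq_of_commute_s3 {S : Type*} [Semigroup S] {x y z : S} (hy : IsGeneralizedInverse_s3 x y)
    (hz : IsGeneralizedInverse_s3 x z) (hl : Commute (x * y) (x * z))
    (hr : Commute (y * x) (z * x)) : y = z :=
  calc
    y = y * (x * z * x) * y := by rw [hz.mul_inv_mul, hy.inv_mul_inv]
    _ = y * ((x * z) * (x * y)) := by simp only [mul_assoc]
    _ = y * ((x * y) * (x * z)) := by rw [hl.eq]
    _ = y * x * y * (x * z) := by simp only [mul_assoc]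
    _ = y * x * (z * x * z) := by rw [hy.inv_mul_inv, hz.inv_mul_inv, mul_assoc]
    _ = (y * x) * (z * x) * z := by simp only [mul_assoc]
    _ = (z * x) * (y * x) * z := by rw [hr.eq]
    _ = z * (x * y * x) * z := by simp only [mul_assoc]
    _ = z := by rw [hy.mul_inv_mul, hz.inv_mul_inv]

protected theorem unique {S : Type*} [CommSemigroup S] {x y z : S}
    (hy : IsGeneralizedInverse_s3 x y) (hz : IsGeneralizedInverse_s3 x z) : y = z :=
  hy.eq_of_commute_s3 hz (.all _ _) (.all _ _)

end IsGeneralizedInverse_s3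

theorem meadow_inv_neg_general {S : Type*} [CommSemigroup S] [HasDistribNeg S] (i : S → S)
    (Ref : ∀ x : S, i (i x) = x)
    (Ril : ∀ x : S, x * (x * i x) = x) :
    ∀ x : S, i (-x) = -i x := by
  have inverse (x : S) : IsGeneralizedInverse_s3 x (i x) :=
    .of_mul_mul_self (Ril x) (by simpa only [Ref] using Ril (i x))
  exact fun x => (inverse (-x)).unique (inverse x).neg

theorem meadow_inv_neg {R : Type*} [CommRing R] (i : R → R)
    (Ref : ∀ x : R, i (i x) = x)
    (Ril : ∀ x : R, x * (x * i x) = x) :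
    ∀ x : R, i (-x) = -i x :=
  meadow_inv_neg_general i Ref Ril
end

section
/- In every meadow, for every element x, if x⁴ = x then x = i(x)·i(x). -/
/-!
In a meadow, `x` and `i x` commute and satisfy `x * i x * x = x` and `i x * x * i x = i x`, and an
element of a semigroup has at most one such inverse. If `x ^ 4 = x`, then `x ^ 2` is one too, so
`i x = x ^ 2` and `i x * i x = x ^ 4 = x`.
-/

/-- `y` is a group inverse of `x`: the two are inverse to each other in a group contained in the
ambient semigroup, whose identity `x * y` need not be a global one. The equations below are the
usual way of saying this without mentioning that group. -/
structure IsGroupInverse {S : Type*} [Mul S] (x y : S) : Prop where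
  commute : Commute x y
  mul_mul_self : x * y * x = x
  inv_mul_mul_inv : y * x * y = y

namespace IsGroupInverse

theorem mul_eq_mul {S : Type*} [Semigroup S] {x y z : S} (hy : IsGroupInverse x y)
    (hz : IsGroupInverse x z) : x * y = x * z :=
  calc
    x * y = y * x := hy.commute.eq
    _ = y * (x * z * x) := by rw [hz.mul_mul_self]
    _ = y * x * (z * x) := by simp only [mul_assoc]
    _ = x * y * (x * z) := by rw [hy.commute.eq, hz.commute.eq]
    _ = x * y * x * z := (mul_assoc _ _ _).symm
    _ = x * z := by rw [hy.mul_mul_self]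

theorem unique {S : Type*} [Semigroup S] {x y z : S} (hy : IsGroupInverse x y)
    (hz : IsGroupInverse x z) : y = z :=
  calc
    y = y * x * y := hy.inv_mul_mul_inv.symm
    _ = y * (x * y) := mul_assoc _ _ _
    _ = y * (x * z) := by rw [hy.mul_eq_mul hz]
    _ = x * y * z := by rw [← mul_assoc, hy.commute.eq]
    _ = z * x * z := by rw [hy.mul_eq_mul hz, hz.commute.eq]
    _ = z := hz.inv_mul_mul_inv

theorem pow_of_pow_eq_self {M : Type*} [Monoid M] {x : M} {n : ℕ} (hx : x ^ (n + 3) = x) :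
    IsGroupInverse x (x ^ (n + 1)) where
  commute := Commute.self_pow x (n + 1)
  mul_mul_self := by rw [← pow_succ', ← pow_succ, hx]
  inv_mul_mul_inv :=
    calc
      x ^ (n + 1) * x * x ^ (n + 1) = x ^ (n + 3) * x ^ n := by
        rw [← pow_succ, ← pow_add, ← pow_add]
        congr 1
        lia
      _ = x ^ (n + 1) := by rw [hx, ← pow_succ']

theorem of_involutive {S : Type*} [CommSemigroup S] {i : S → S} (hi : Function.Involutive i)
    (h : ∀ x, x * (x * i x) = x) (x : S) : IsGroupInverse x (i x) where
  commute := Commute.all x (i x)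
  mul_mul_self := by rw [mul_comm, h]
  inv_mul_mul_inv := by
    have h_inv : i x * (i x * x) = i x := by simpa only [hi x] using h (i x)
    rw [mul_comm, h_inv]

end IsGroupInverse

theorem meadow_fourth_power_general {M : Type*} [Monoid M] {x y : M} (hy : IsGroupInverse x y)
    (hx : x ^ 4 = x) : x = y * y := by
  have hsq : y = x ^ 2 := hy.unique (.pow_of_pow_eq_self (n := 1) hx)
  rw [hsq, ← pow_add, hx]

theorem meadow_fourth_power {R : Type*} [CommRing R] (i : R → R)
    (Ref : ∀ x : R, i (i x) = x)
    (Ril : ∀ x : R, x * (x * i x) = x) :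
    ∀ x : R, x ^ 4 = x → x = i x * i x :=
  fun x hx => meadow_fourth_power_general (.of_involutive Ref Ril x) hx
end

section
/- Let R be a commutative von Neumann regular ring with unit, i.e. a commutative ring with unit such that for every x ∈ R there exists y ∈ R with x·y·x = x. Then R can be expanded to a meadow: there exists a function i : R → R satisfying Ref: i(i(x)) = x for all x, and Ril: x·(x·i(x)) = x for all x. -/
/-- `y` is a generalized inverse of `x` in the sense of semigroup theory. The relation is symmetric,
which is what makes a uniquely chosen generalized inverse an involution. -/
structure IsGeneralizedInverse_s9 {S : Type*} [Semigroup S] (x y : S) : Prop where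
  mul_mul_self : x * y * x = x
  mul_mul_self' : y * x * y = y

section Semigroup

variable {S : Type*} [Semigroup S] {x y z : S}

theorem IsGeneralizedInverse_s9.symm (h : IsGeneralizedInverse_s9 x y) : IsGeneralizedInverse_s9 y x :=
  ⟨h.mul_mul_self', h.mul_mul_self⟩

theorem isGeneralizedInverse_mul_mul (h : x * y * x = x) :
    IsGeneralizedInverse_s9 x (y * x * y) where
  mul_mul_self :=
    calc x * (y * x * y) * x = x * y * x * y * x := by simp only [mul_assoc]
      _ = x := by rw [h, h]
  mul_mul_self' :=
    calc y * x * y * x * (y * x * y) = y * (x * y * x * y * x) * y := by simp only [mul_assoc]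
      _ = y * x * y := by rw [h, h]

theorem IsGeneralizedInverse_s9.eq_of_commute (hy : IsGeneralizedInverse_s9 x y)
    (hz : IsGeneralizedInverse_s9 x z) (hxy : Commute x y) (hxz : Commute x z) : y = z := by
  -- Both sides are the identity of the maximal subgroup containing `x`.
  have same_idempotent : y * x = x * z :=
    calc y * x = y * (x * z * x) := by rw [hz.mul_mul_self]
      _ = y * x * (z * x) := by simp only [mul_assoc]
      _ = x * y * (x * z) := by rw [hxy.eq, hxz.eq]
      _ = x * y * x * z := by simp only [mul_assoc]
      _ = x * z := by rw [hy.mul_mul_self]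
  calc y = y * x * y := hy.mul_mul_self'.symm
    _ = y * (y * x) := by rw [mul_assoc, hxy.eq]
    _ = y * x * z := by rw [mul_assoc, same_idempotent]
    _ = z * x * z := by rw [same_idempotent, hxz.eq]
    _ = z := hz.mul_mul_self'

theorem exists_isGeneralizedInverse_commute (hxy : Commute x y) (h : x * y * x = x) :
    ∃ z, IsGeneralizedInverse_s9 x z ∧ Commute x z :=
  ⟨y * x * y, isGeneralizedInverse_mul_mul h,
    (hxy.mul_right (Commute.refl x)).mul_right hxy⟩

/-- Semigroups satisfying `hreg` are the completely regular ones, i.e. the unions of groups. -/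
theorem vonNeumannRegular_expands_to_meadow_general
    (hreg : ∀ x : S, ∃ y : S, Commute x y ∧ x * y * x = x) :
    ∃ i : S → S, (∀ x : S, i (i x) = x) ∧ (∀ x : S, x * (x * i x) = x) := by
  have hinv (x : S) : ∃ z, IsGeneralizedInverse_s9 x z ∧ Commute x z :=
    let ⟨_, hxy, h⟩ := hreg x
    exists_isGeneralizedInverse_commute hxy h
  choose i hi hcomm using hinv
  refine ⟨i, fun x ↦ ?_, fun x ↦ ?_⟩
  · exact (hi (i x)).eq_of_commute (hi x).symm (hcomm (i x)) (hcomm x).symm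
  · rw [(hcomm x).eq, ← mul_assoc, (hi x).mul_mul_self]

end Semigroup

theorem vonNeumannRegular_expands_to_meadow {R : Type*} [CommRing R]
    (hreg : ∀ x : R, ∃ y : R, x * y * x = x) :
    ∃ i : R → R, (∀ x : R, i (i x) = x) ∧ (∀ x : R, x * (x * i x) = x) :=
  vonNeumannRegular_expands_to_meadow_general fun x ↦
    (hreg x).imp fun y h ↦ ⟨Commute.all x y, h⟩
end

section
/- Let R be a commutative ring with unit, and let p, q : R → R be two functions each satisfying Ref and Ril, i.e. p(p(x)) = x, x·(x·p(x)) = x, q(q(x)) = x, and x·(x·q(x)) = x for all x ∈ R. Then p = q. (The meadow expansion of a commutative von Neumann regular ring is unique.) -/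
/-! If `x * (x * y) = x`, then `x * y` depends only on `x`: it is the idempotent acting as the
identity on the multiples of `x`. If also `y * (y * x) = y`, then that idempotent fixes `y` as
well, which determines `y`. For `y = p x` with `p` involutive, the second identity is the first
one at `p x`. -/

section CommSemigroup

variable {S : Type*} [CommSemigroup S] {x y z : S}

theorem mul_eq_mul_of_mul_mul_eq_self (hxy : x * (x * y) = x) (hxz : x * (x * z) = x) :
    x * y = x * z :=
  calc
    x * y = x * (x * z) * y := by rw [hxz]
    _ = x * (x * y) * z := by ac_rfl
    _ = x * z := by rw [hxy]

theorem generalized_inverse_unique (hxy : x * (x * y) = x) (hyx : y * (y * x) = y)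
    (hxz : x * (x * z) = x) (hzx : z * (z * x) = z) : y = z := by
  have idempotent_eq : x * y = x * z := mul_eq_mul_of_mul_mul_eq_self hxy hxz
  calc
    y = y * (x * y) := by rw [mul_comm x y, hyx]
    _ = y * (x * z) := by rw [idempotent_eq]
    _ = z * (x * y) := by ac_rfl
    _ = z * (x * z) := by rw [idempotent_eq]
    _ = z := by rw [mul_comm x z, hzx]

end CommSemigroup

theorem mul_mul_self_of_involutive {S : Type*} [Mul S] {p : S → S} (hp : Function.Involutive p)
    (hpRil : ∀ x, x * (x * p x) = x) (x : S) : p x * (p x * x) = p x := by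
  simpa only [hp x] using hpRil (p x)

theorem meadow_expansion_unique_general {S : Type*} [CommSemigroup S] (p q : S → S)
    (hpRef : ∀ x : S, p (p x) = x) (hpRil : ∀ x : S, x * (x * p x) = x)
    (hqRef : ∀ x : S, q (q x) = x) (hqRil : ∀ x : S, x * (x * q x) = x) :
    p = q := by
  funext x
  exact generalized_inverse_unique (hpRil x) (mul_mul_self_of_involutive hpRef hpRil x)
    (hqRil x) (mul_mul_self_of_involutive hqRef hqRil x)

theorem meadow_expansion_unique {R : Type*} [CommRing R] (p q : R → R)
    (hpRef : ∀ x : R, p (p x) = x) (hpRil : ∀ x : R, x * (x * p x) = x)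
    (hqRef : ∀ x : R, q (q x) = x) (hqRil : ∀ x : R, x * (x * q x) = x) :
    p = q :=
  meadow_expansion_unique_general p q hpRef hpRil hqRef hqRil
end

section
/- In every meadow, the inverse has the explicit first-order definition: for all x, y ∈ R, i(x) = y if and only if there exists z ∈ R with x·z·x = x and y = z·x·z. -/
/-!
In any semigroup, if `x * z * x = x` then `z * x * z` is an inverse of `x` in the sense of
semigroup theory, and `x` has at most one such inverse commuting with it. The restricted inverse
law at `x` and at `i x`, combined with reflection, says that `i x` is an inverse of this kind, so
`i x = z * x * z`.
-/

/-- `y` is an inverse of `x` in the sense of semigroup theory (a reflexive generalized inverse).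
This is the relation between `x` and `i x` in a meadow; `x` and `y` need not commute, so that the
notion makes sense in every semigroup. -/
structure IsGeneralizedInverse_s11 {S : Type*} [Mul S] (x y : S) : Prop where
  mul_mul_eq_left : x * y * x = x
  mul_mul_eq_right : y * x * y = y

namespace IsGeneralizedInverse_s11

variable {S : Type*} [Semigroup S] {x y z : S}

theorem of_mul_mul_eq (hz : x * z * x = x) : IsGeneralizedInverse_s11 x (z * x * z) where
  mul_mul_eq_left :=
    calc x * (z * x * z) * x = x * z * x * z * x := by simp only [mul_assoc]
      _ = x := by rw [hz, hz]
  mul_mul_eq_right :=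
    calc z * x * z * x * (z * x * z) = z * (x * z * x * z * x) * z := by simp only [mul_assoc]
      _ = z * x * z := by rw [hz, hz]

theorem of_commute (hxy : Commute x y) (hx : x * (x * y) = x) (hy : y * (y * x) = y) :
    IsGeneralizedInverse_s11 x y where
  mul_mul_eq_left := by rw [mul_assoc, ← hxy.eq, hx]
  mul_mul_eq_right := by rw [mul_assoc, hxy.eq, hy]

theorem mul_eq_mul_of_commute (hy : IsGeneralizedInverse_s11 x y) (hz : IsGeneralizedInverse_s11 x z)
    (hxy : Commute x y) (hxz : Commute x z) : x * y = x * z :=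
  calc x * y = x * z * x * y := by rw [hz.mul_mul_eq_left]
    _ = z * x * (y * x) := by rw [hxz.eq, mul_assoc (z * x), hxy.eq]
    _ = z * (x * y * x) := by simp only [mul_assoc]
    _ = x * z := by rw [hy.mul_mul_eq_left, hxz.eq]

theorem eq_of_commute_s11 (hy : IsGeneralizedInverse_s11 x y) (hz : IsGeneralizedInverse_s11 x z)
    (hxy : Commute x y) (hxz : Commute x z) : y = z := by
  have hmul : x * y = x * z := hy.mul_eq_mul_of_commute hz hxy hxz
  calc y = y * x * y := hy.mul_mul_eq_right.symm
    _ = y * x * z := by rw [mul_assoc, hmul, ← mul_assoc]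
    _ = z * x * z := by rw [← hxy.eq, hmul, hxz.eq]
    _ = z := hz.mul_mul_eq_right

end IsGeneralizedInverse_s11

theorem meadow_inverse_explicit_definition_general {S : Type*} [CommSemigroup S] (i : S → S)
    (Ref : ∀ x : S, i (i x) = x)
    (Ril : ∀ x : S, x * (x * i x) = x) :
    ∀ x y : S, i x = y ↔ ∃ z : S, x * z * x = x ∧ y = z * x * z := by
  intro x y
  have hi : i x * (i x * x) = i x := by simpa only [Ref] using Ril (i x)
  have hinv : IsGeneralizedInverse_s11 x (i x) := .of_commute (.all _ _) (Ril x) hi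
  constructor
  · rintro rfl
    exact ⟨i x, hinv.mul_mul_eq_left, hinv.mul_mul_eq_right.symm⟩
  · rintro ⟨z, hz, rfl⟩
    exact hinv.eq_of_commute_s11 (.of_mul_mul_eq hz) (.all _ _) (.all _ _)

theorem meadow_inverse_explicit_definition {R : Type*} [CommRing R] (i : R → R)
    (Ref : ∀ x : R, i (i x) = x)
    (Ril : ∀ x : R, x * (x * i x) = x) :
    ∀ x y : R, i x = y ↔ ∃ z : R, x * z * x = x ∧ y = z * x * z :=
  meadow_inverse_explicit_definition_general i Ref Ril
end

section
/- Let R be a meadow and x ∈ R. Then the principal ideal generated by x equals the principal ideal generated by the idempotent x·i(x), and moreover x, x·i(x), and i(x) all belong to the principal ideal generated by x. -/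
theorem dvd_of_mul_mul_eq_self {M : Type*} [CommSemigroup M] {x y : M}
    (h : y * (y * x) = y) : x ∣ y :=
  dvd_of_mul_left_dvd (Dvd.intro_left y h)

section CommSemiring

variable {R : Type*} [CommSemiring R] {x y : R}

theorem span_singleton_eq_span_singleton_mul_of_mul_mul_eq_self (h : x * (x * y) = x) :
    Ideal.span {x} = Ideal.span {x * y} :=
  le_antisymm
    (Ideal.span_singleton_le_span_singleton.mpr (Dvd.intro_left x h))
    (Ideal.span_singleton_le_span_singleton.mpr (dvd_mul_right x y))

theorem meadow_principal_ideal_general (hxy : x * (x * y) = x) (hyx : y * (y * x) = y) :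
    Ideal.span {x} = Ideal.span {x * y} ∧
      x ∈ Ideal.span {x} ∧ x * y ∈ Ideal.span {x} ∧ y ∈ Ideal.span {x} :=
  ⟨span_singleton_eq_span_singleton_mul_of_mul_mul_eq_self hxy,
    Ideal.mem_span_singleton_self x,
    Ideal.mem_span_singleton.mpr (dvd_mul_right x y),
    Ideal.mem_span_singleton.mpr (dvd_of_mul_mul_eq_self hyx)⟩

end CommSemiring

theorem meadow_principal_ideal {R : Type*} [CommRing R] (i : R → R)
    (Ref : ∀ x : R, i (i x) = x)
    (Ril : ∀ x : R, x * (x * i x) = x)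
    (x : R) :
    Ideal.span {x} = Ideal.span {x * i x} ∧
      x ∈ Ideal.span {x} ∧ x * i x ∈ Ideal.span {x} ∧ i x ∈ Ideal.span {x} :=
  have inv_ril : i x * (i x * x) = i x := by simpa only [Ref] using Ril (i x)
  meadow_principal_ideal_general (Ril x) inv_ril
end

section
/- Let R be a meadow, F a field whose inverse operation is zero-totalized (0⁻¹ = 0, as in Mathlib's field inverse), and H : R → F a ring homomorphism. Then H preserves inverses: for every x ∈ R, H(i(x)) = (H(x))⁻¹. -/
theorem eq_inv_of_mul_mul_eq {G₀ : Type*} [GroupWithZero G₀] {a b : G₀}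
    (hab : a * (a * b) = a) (hba : b * (b * a) = b) : b = a⁻¹ := by
  rcases eq_or_ne a 0 with rfl | ha
  · have hb : b = 0 := by simpa using hba.symm
    rw [hb, inv_zero]
  · have hab_one : a * b = 1 := (mul_eq_left₀ ha).mp hab
    exact eq_inv_of_mul_eq_one_right hab_one

theorem meadow_hom_preserves_inverse_general {M G₀ Φ : Type*} [Mul M] [GroupWithZero G₀]
    [FunLike Φ M G₀] [MulHomClass Φ M G₀]
    (i : M → M)
    (Ref : ∀ x : M, i (i x) = x)
    (Ril : ∀ x : M, x * (x * i x) = x)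
    (H : Φ) (x : M) :
    H (i x) = (H x)⁻¹ := by
  have Ril_inv : i x * (i x * x) = i x := by simpa only [Ref] using Ril (i x)
  apply eq_inv_of_mul_mul_eq
  · rw [← map_mul, ← map_mul, Ril]
  · rw [← map_mul, ← map_mul, Ril_inv]

theorem meadow_hom_preserves_inverse {R : Type*} [CommRing R] {F : Type*} [Field F]
    (i : R → R)
    (Ref : ∀ x : R, i (i x) = x)
    (Ril : ∀ x : R, x * (x * i x) = x)
    (H : R →+* F) :
    ∀ x : R, H (i x) = (H x)⁻¹ :=
  meadow_hom_preserves_inverse_general i Ref Ril H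
end

section
/- In every meadow, for all x, y: (x·y)·i(x·y) − x·i(x) − y·i(y) = 0 if and only if (x = 0 and y = 0). (The term U(x,y) encodes a conjunction of two equations as a single equation.) -/
/-!
If `x * (x * a) = x`, then `x * a` is an idempotent that vanishes only when `x` does, and it does
not depend on the choice of `a`. Restricted inverses multiply, so the idempotent of `x * y` is the
product `e * f` of the idempotents of `x` and `y`. Finally, multiplying `e * f = e + f` by `e`
gives `e = 0`, hence `f = 0`.
-/

/-- `a` is a restricted inverse of `x`: the law `Ril` of meadows, for a single pair of elements.
It makes the argument independent of a globally chosen inverse operation. -/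
def IsRestrictedInverse {S : Type*} [Mul S] (x a : S) : Prop :=
  x * (x * a) = x

namespace IsRestrictedInverse

section CommSemigroup

variable {S : Type*} [CommSemigroup S] {x y a b : S}

theorem isIdempotentElem_mul (ha : IsRestrictedInverse x a) : IsIdempotentElem (x * a) :=
  calc x * a * (x * a) = x * (x * a) * a := mul_right_comm x a (x * a)
    _ = x * a := by rw [ha]

theorem mul_eq_mul (ha : IsRestrictedInverse x a) (hb : IsRestrictedInverse x b) :
    x * a = x * b :=
  calc x * a = x * (x * b) * a := by rw [hb]
    _ = x * (x * a) * b := by simp only [mul_assoc, mul_comm b a]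
    _ = x * b := by rw [ha]

theorem mul (ha : IsRestrictedInverse x a) (hb : IsRestrictedInverse y b) :
    IsRestrictedInverse (x * y) (a * b) :=
  calc x * y * (x * y * (a * b)) = x * (x * a) * (y * (y * b)) := by
        rw [mul_mul_mul_comm x y a b, mul_mul_mul_comm]
    _ = x * y := by rw [ha, hb]

end CommSemigroup

theorem mul_eq_zero_iff {S : Type*} [SemigroupWithZero S] {x a : S}
    (ha : IsRestrictedInverse x a) : x * a = 0 ↔ x = 0 where
  mp h := by rw [← ha, h, mul_zero]
  mpr h := by rw [h, zero_mul]

end IsRestrictedInverse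

theorem mul_sub_sub_eq_zero_iff_of_isIdempotentElem {R : Type*} [NonUnitalRing R] {e f : R}
    (he : IsIdempotentElem e) : e * f - e - f = 0 ↔ e = 0 ∧ f = 0 where
  mp h := by
    have he_zero : e = 0 := by
      simpa [mul_sub, ← mul_assoc, he.eq] using congrArg (e * ·) h
    exact ⟨he_zero, by simpa [he_zero] using h⟩
  mpr := by
    rintro ⟨rfl, rfl⟩
    simp

theorem meadow_conjunction_encoding_general {R : Type*} [NonUnitalCommRing R] {x y a b c : R}
    (ha : IsRestrictedInverse x a) (hb : IsRestrictedInverse y b)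
    (hc : IsRestrictedInverse (x * y) c) :
    x * y * c - x * a - y * b = 0 ↔ x = 0 ∧ y = 0 := by
  have hmul : x * y * c = x * a * (y * b) :=
    (hc.mul_eq_mul (ha.mul hb)).trans (mul_mul_mul_comm x y a b)
  rw [hmul, mul_sub_sub_eq_zero_iff_of_isIdempotentElem ha.isIdempotentElem_mul, ha.mul_eq_zero_iff,
    hb.mul_eq_zero_iff]

theorem meadow_conjunction_encoding {R : Type*} [CommRing R] (i : R → R)
    (Ref : ∀ x : R, i (i x) = x)
    (Ril : ∀ x : R, x * (x * i x) = x) :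
    ∀ x y : R, (x * y) * i (x * y) - x * i x - y * i y = 0 ↔ (x = 0 ∧ y = 0) :=
  fun x y ↦ meadow_conjunction_encoding_general (Ril x) (Ril y) (Ril (x * y))
end

section
/- Let R be a meadow of finite characteristic k > 0, i.e. k is the smallest positive natural number such that k·1 = 0 in R. Then k is squarefree. -/
/-! In a meadow every `x` is divisible by `x ^ 2`, so there are no nonzero nilpotents. If `k` is the
characteristic of a reduced ring, `k ∣ m ^ n` says that the image of `m` is nilpotent, hence zero,
so `k ∣ m`: thus `k` is a radical element of `ℕ`, which for `k ≠ 0` means squarefree. -/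

theorem isReduced_of_forall_sq_dvd {M : Type*} [MonoidWithZero M] (h : ∀ x : M, x ^ 2 ∣ x) :
    IsReduced M :=
  (isReduced_iff_pow_one_lt 2 one_lt_two).2 fun x hx => zero_dvd_iff.1 (hx ▸ h x)

theorem charP_of_isLeast {R : Type*} [AddMonoidWithOne R] {k : ℕ}
    (hk : IsLeast {m : ℕ | 0 < m ∧ (m : R) = 0} k) : CharP R k := by
  obtain ⟨⟨k_pos, cast_k⟩, k_le⟩ := hk
  have addOrderOf_one_eq : addOrderOf (1 : R) = k :=
    (addOrderOf_eq_iff k_pos).2 ⟨(nsmul_one k).trans cast_k, fun m m_lt m_pos hm =>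
      m_lt.not_ge (k_le ⟨m_pos, (nsmul_one m).symm.trans hm⟩)⟩
  exact ⟨fun m => by rw [← addOrderOf_one_eq, addOrderOf_dvd_iff_nsmul_eq_zero, nsmul_one]⟩

theorem isRadical_of_charP (R : Type*) [Semiring R] [IsReduced R] (k : ℕ) [CharP R k] :
    IsRadical k := by
  intro n m k_dvd_pow
  have cast_pow_eq_zero : (m : R) ^ n = 0 := by
    rw [← Nat.cast_pow, CharP.cast_eq_zero_iff R k]
    exact k_dvd_pow
  exact (CharP.cast_eq_zero_iff R k m).1 (eq_zero_of_pow_eq_zero cast_pow_eq_zero)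

theorem meadow_char_squarefree_general {R : Type*} [Semiring R] [IsReduced R] {k : ℕ}
    (hk : IsLeast {m : ℕ | 0 < m ∧ (m : R) = 0} k) : Squarefree k :=
  have : CharP R k := charP_of_isLeast hk
  (isRadical_of_charP R k).squarefree hk.1.1.ne'

theorem meadow_char_squarefree {R : Type*} [CommRing R] (i : R → R)
    (Ref : ∀ x : R, i (i x) = x)
    (Ril : ∀ x : R, x * (x * i x) = x)
    (k : ℕ) (hk : 0 < k) (hchar : (k : R) = 0)
    (hmin : ∀ m : ℕ, 0 < m → (m : R) = 0 → k ≤ m) :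
    Squarefree k := by
  have : IsReduced R := isReduced_of_forall_sq_dvd fun x => ⟨i x, by rw [sq, mul_assoc, Ril]⟩
  exact meadow_char_squarefree_general ⟨⟨hk, hchar⟩, fun m hm => hmin m hm.1 hm.2⟩
end
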